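/- arXiv:math/0409553 — 5 statements merged into one kernel-verified Lean document; each statement's English description precedes it below -/
import Mathlib

section
/- Let E be a finite-dimensional real inner product space, U ⊆ E a nonempty open set, and φ : U → ℂⁿ a differentiable map. Then φ is pseudo-horizontally weakly conformal if and only if for every open set V ⊆ ℂⁿ and every holomorphic function ψ : V → ℂ, the function ψ∘φ : φ⁻¹(V) → ℂ is pseudo-horizontally weakly conformal, i.e. writing ψ∘φ = w₁ + i w₂ one has ‖∇w₁(x)‖² = ‖∇w₂(x)‖² and ⟨∇w₁(x), ∇w₂(x)⟩ = 0 for all x ∈ φ⁻¹(V). -/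
/-!
Extend the inner product on the real dual of `E` complex-bilinearly to a pairing `Q` of
complex-valued forms. The real and imaginary parts of `Q(dφᴬ, dφᴮ)` are the two expressions in the
definition of pseudo-horizontal weak conformality. Hence `φ` is PHWC at `x` iff the
complex-bilinear form `(ℓ, m) ↦ Q(ℓ ∘ dφₓ, m ∘ dφₓ)` on the dual of `ℂⁿ` vanishes on coordinate
functionals, and so everywhere. By polarization it is enough that it vanishes on the diagonal.
Since `d(ψ ∘ φ)ₓ = dψ ∘ dφₓ` with `dψ` complex-linear, `ψ ∘ φ` is PHWC at `x` iff the diagonal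
value at `ℓ = dψ` is zero, and every `ℓ` occurs, namely for the linear function `ψ = ℓ`.
-/

open scoped RealInnerProductSpace

/-- The Laplacian of a real-valued function on an inner product space:
the trace of the derivative of the gradient (i.e. of the second derivative). -/
noncomputable def lap {E : Type*} [NormedAddCommGroup E] [InnerProductSpace ℝ E]
    [CompleteSpace E] (f : E → ℝ) (x : E) : ℝ :=
  LinearMap.trace ℝ E (fderiv ℝ (gradient f) x : E →ₗ[ℝ] E)

/-- A real-valued function is harmonic on an open set `W` if it is `C²` there and its
Laplacian vanishes identically on `W`. -/
def HarmonicOn {E : Type*} [NormedAddCommGroup E] [InnerProductSpace ℝ E]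
    [CompleteSpace E] (f : E → ℝ) (W : Set E) : Prop :=
  ContDiffOn ℝ 2 f W ∧ ∀ x ∈ W, lap f x = 0

/-- Pseudo-horizontally weakly conformal map into `ℂⁿ`, on a set `U`. -/
def PHWCOn {E : Type*} [NormedAddCommGroup E] [InnerProductSpace ℝ E] [CompleteSpace E]
    {n : ℕ} (φ : E → (Fin n → ℂ)) (U : Set E) : Prop :=
  ∀ A B : Fin n, ∀ x ∈ U,
    ⟪gradient (fun y => (φ y A).re) x, gradient (fun y => (φ y B).re) x⟫ -
      ⟪gradient (fun y => (φ y A).im) x, gradient (fun y => (φ y B).im) x⟫ = 0 ∧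
    ⟪gradient (fun y => (φ y A).im) x, gradient (fun y => (φ y B).re) x⟫ +
      ⟪gradient (fun y => (φ y A).re) x, gradient (fun y => (φ y B).im) x⟫ = 0

/-- Pseudo harmonic morphism into `ℂⁿ` on a set `U`: a `C²` map which is harmonic
(the real and imaginary parts of each component are harmonic) and
pseudo-horizontally weakly conformal. -/
def PHMOn {E : Type*} [NormedAddCommGroup E] [InnerProductSpace ℝ E] [CompleteSpace E]
    {n : ℕ} (φ : E → (Fin n → ℂ)) (U : Set E) : Prop :=
  ContDiffOn ℝ 2 φ U ∧
  (∀ k : Fin n, HarmonicOn (fun y => (φ y k).re) U ∧ HarmonicOn (fun y => (φ y k).im) U) ∧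
  PHWCOn φ U

section DualPairing

open Complex InnerProductSpace

lemma reCLM_comp_smul {M : Type*} [AddCommMonoid M] [Module ℝ M] [TopologicalSpace M] (c : ℂ)
    (a : M →L[ℝ] ℂ) : reCLM ∘L (c • a) = c.re • (reCLM ∘L a) + (-c.im) • (imCLM ∘L a) := by
  ext; simp [sub_eq_add_neg]

lemma imCLM_comp_smul {M : Type*} [AddCommMonoid M] [Module ℝ M] [TopologicalSpace M] (c : ℂ)
    (a : M →L[ℝ] ℂ) : imCLM ∘L (c • a) = c.re • (imCLM ∘L a) + c.im • (reCLM ∘L a) := by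
  ext; simp

variable {E : Type*} [NormedAddCommGroup E] [InnerProductSpace ℝ E] [CompleteSpace E]

/-- The complex-bilinear (not sesquilinear) extension of the inner product on the real dual of `E`
to complex-valued forms: `b` is evaluated at the Riesz representative of `a` in `E ⊗ ℂ`. -/
noncomputable def dualPairing : LinearMap.BilinForm ℂ (E →L[ℝ] ℂ) :=
  LinearMap.mk₂ ℂ
    (fun a b => b ((toDual ℝ E).symm (reCLM ∘L a)) + I * b ((toDual ℝ E).symm (imCLM ∘L a)))
    (fun a a' b => by simp only [ContinuousLinearMap.comp_add, map_add]; ring)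
    (fun c a b => by
      rw [reCLM_comp_smul, imCLM_comp_smul]
      apply Complex.ext <;> simp <;> ring)
    (fun a b b' => by simp only [add_apply]; ring)
    (fun c a b => by simp only [smul_apply, smul_eq_mul]; ring)

lemma dualPairing_re (a b : E →L[ℝ] ℂ) :
    (dualPairing a b).re =
      ⟪(toDual ℝ E).symm (reCLM ∘L a), (toDual ℝ E).symm (reCLM ∘L b)⟫ -
        ⟪(toDual ℝ E).symm (imCLM ∘L a), (toDual ℝ E).symm (imCLM ∘L b)⟫ := by
  simp [dualPairing, real_inner_comm ((toDual ℝ E).symm (_ ∘L b)), toDual_symm_apply,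
    sub_eq_add_neg]

lemma dualPairing_im (a b : E →L[ℝ] ℂ) :
    (dualPairing a b).im =
      ⟪(toDual ℝ E).symm (imCLM ∘L a), (toDual ℝ E).symm (reCLM ∘L b)⟫ +
        ⟪(toDual ℝ E).symm (reCLM ∘L a), (toDual ℝ E).symm (imCLM ∘L b)⟫ := by
  simp [dualPairing, real_inner_comm ((toDual ℝ E).symm (_ ∘L b)), toDual_symm_apply, add_comm]

lemma dualPairing_comm (a b : E →L[ℝ] ℂ) : dualPairing a b = dualPairing b a := by
  apply Complex.ext
  · simp only [dualPairing_re, real_inner_comm]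
  · simp only [dualPairing_im, real_inner_comm, add_comm]

lemma gradient_re {f : E → ℂ} {x : E} (hf : DifferentiableAt ℝ f x) :
    gradient (fun y => (f y).re) x = (toDual ℝ E).symm (reCLM ∘L fderiv ℝ f x) :=
  congrArg _ (reCLM.hasFDerivAt.comp x hf.hasFDerivAt).fderiv

lemma gradient_im {f : E → ℂ} {x : E} (hf : DifferentiableAt ℝ f x) :
    gradient (fun y => (f y).im) x = (toDual ℝ E).symm (imCLM ∘L fderiv ℝ f x) :=
  congrArg _ (imCLM.hasFDerivAt.comp x hf.hasFDerivAt).fderiv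

lemma dualPairing_fderiv_eq_zero_iff {f g : E → ℂ} {x : E}
    (hf : DifferentiableAt ℝ f x) (hg : DifferentiableAt ℝ g x) :
    dualPairing (fderiv ℝ f x) (fderiv ℝ g x) = 0 ↔
      ⟪gradient (fun y => (f y).re) x, gradient (fun y => (g y).re) x⟫ -
          ⟪gradient (fun y => (f y).im) x, gradient (fun y => (g y).im) x⟫ = 0 ∧
        ⟪gradient (fun y => (f y).im) x, gradient (fun y => (g y).re) x⟫ +
          ⟪gradient (fun y => (f y).re) x, gradient (fun y => (g y).im) x⟫ = 0 := by
  rw [Complex.ext_iff, dualPairing_re, dualPairing_im, gradient_re hf, gradient_im hf,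
    gradient_re hg, gradient_im hg, zero_re, zero_im]

lemma dualPairing_fderiv_self_eq_zero_iff {f : E → ℂ} {x : E} (hf : DifferentiableAt ℝ f x) :
    dualPairing (fderiv ℝ f x) (fderiv ℝ f x) = 0 ↔
      ‖gradient (fun y => (f y).re) x‖ ^ 2 = ‖gradient (fun y => (f y).im) x‖ ^ 2 ∧
        ⟪gradient (fun y => (f y).re) x, gradient (fun y => (f y).im) x⟫ = 0 := by
  rw [dualPairing_fderiv_eq_zero_iff hf hf, real_inner_self_eq_norm_sq,
    real_inner_self_eq_norm_sq, sub_eq_zero, real_inner_comm, add_self_eq_zero]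

end DualPairing

section PullbackForm

lemma eq_sum_apply_single_smul_proj {ι 𝕜 : Type*} [Fintype ι] [DecidableEq ι] [CommSemiring 𝕜]
    [TopologicalSpace 𝕜] [IsTopologicalSemiring 𝕜] (ℓ : (ι → 𝕜) →L[𝕜] 𝕜) :
    ℓ = ∑ i, ℓ (Pi.single i 1) • (ContinuousLinearMap.proj i : (ι → 𝕜) →L[𝕜] 𝕜) := by
  ext v
  conv_lhs => rw [pi_eq_sum_univ' v]
  simp [mul_comm]

variable {E : Type*} [NormedAddCommGroup E] [InnerProductSpace ℝ E] [CompleteSpace E]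
  {W : Type*} [AddCommMonoid W] [TopologicalSpace W] [Module ℝ W] [Module ℂ W]
  [IsScalarTower ℝ ℂ W]

/-- The bilinear form `(ℓ, m) ↦ dualPairing (ℓ ∘ L) (m ∘ L)` on the complex dual of `W`. Its
vanishing is the coordinate-free form of pseudo-horizontal weak conformality for the real-linear
map `L`. -/
noncomputable def pullbackForm (L : E →L[ℝ] W) : LinearMap.BilinForm ℂ (W →L[ℂ] ℂ) :=
  let pullback : (W →L[ℂ] ℂ) →ₗ[ℂ] E →L[ℝ] ℂ :=
    { toFun := fun ℓ => ℓ.restrictScalars ℝ ∘L L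
      map_add' := fun _ _ => rfl
      map_smul' := fun _ _ => rfl }
  dualPairing.comp pullback pullback

lemma pullbackForm_apply (L : E →L[ℝ] W) (ℓ m : W →L[ℂ] ℂ) :
    pullbackForm L ℓ m = dualPairing (ℓ.restrictScalars ℝ ∘L L) (m.restrictScalars ℝ ∘L L) :=
  rfl

lemma pullbackForm_eq_zero_iff_self (L : E →L[ℝ] W) :
    pullbackForm L = 0 ↔ ∀ ℓ : W →L[ℂ] ℂ, pullbackForm L ℓ ℓ = 0 :=
  LinearMap.BilinForm.ext_iff_of_isSymm ⟨fun _ _ => dualPairing_comm _ _⟩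
    LinearMap.BilinForm.isSymm_zero

lemma pullbackForm_eq_zero_iff_proj {ι : Type*} [Finite ι] (L : E →L[ℝ] (ι → ℂ)) :
    pullbackForm L = 0 ↔ ∀ i j, pullbackForm L (.proj i) (.proj j) = 0 := by
  classical
  have := Fintype.ofFinite ι
  refine ⟨fun h i j => by rw [h]; rfl, fun h => ?_⟩
  ext ℓ m
  rw [eq_sum_apply_single_smul_proj ℓ, eq_sum_apply_single_smul_proj m]
  simp [h]

end PullbackForm

section PHWC

variable {E : Type*} [NormedAddCommGroup E] [InnerProductSpace ℝ E] [CompleteSpace E]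

lemma pullbackForm_fderiv_self_eq_zero_iff {W : Type*} [NormedAddCommGroup W] [NormedSpace ℝ W]
    [NormedSpace ℂ W] [IsScalarTower ℝ ℂ W] {φ : E → W} {ψ : W → ℂ} {x : E}
    (hφ : DifferentiableAt ℝ φ x) (hψ : DifferentiableAt ℂ ψ (φ x)) :
    pullbackForm (fderiv ℝ φ x) (fderiv ℂ ψ (φ x)) (fderiv ℂ ψ (φ x)) = 0 ↔
      ‖gradient (fun y => (ψ (φ y)).re) x‖ ^ 2 = ‖gradient (fun y => (ψ (φ y)).im) x‖ ^ 2 ∧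
        ⟪gradient (fun y => (ψ (φ y)).re) x, gradient (fun y => (ψ (φ y)).im) x⟫ = 0 := by
  have hcomp := (hψ.hasFDerivAt.restrictScalars ℝ).comp x hφ.hasFDerivAt
  rw [pullbackForm_apply, ← hcomp.fderiv]
  exact dualPairing_fderiv_self_eq_zero_iff hcomp.differentiableAt

lemma pullbackForm_fderiv_proj {ι : Type*} [Finite ι] {φ : E → (ι → ℂ)} {x : E}
    (hφ : DifferentiableAt ℝ φ x) (i j : ι) :
    pullbackForm (fderiv ℝ φ x) (.proj i) (.proj j) =
      dualPairing (fderiv ℝ (fun y => φ y i) x) (fderiv ℝ (fun y => φ y j) x) := by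
  have := Fintype.ofFinite ι
  rw [(hasFDerivAt_pi'.1 hφ.hasFDerivAt i).fderiv, (hasFDerivAt_pi'.1 hφ.hasFDerivAt j).fderiv]
  rfl

lemma phwcOn_iff_pullbackForm_fderiv_eq_zero {n : ℕ} {φ : E → (Fin n → ℂ)} {U : Set E}
    (hφ : ∀ x ∈ U, DifferentiableAt ℝ φ x) :
    PHWCOn φ U ↔ ∀ x ∈ U, pullbackForm (fderiv ℝ φ x) = 0 := by
  have hswap : (∀ x ∈ U, pullbackForm (fderiv ℝ φ x) = 0) ↔
      ∀ A B : Fin n, ∀ x ∈ U, pullbackForm (fderiv ℝ φ x) (.proj A) (.proj B) = 0 := by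
    simp only [pullbackForm_eq_zero_iff_proj]
    exact ⟨fun h A B x hx => h x hx A B, fun h x hx A B => h A B x hx⟩
  rw [hswap]
  refine forall₂_congr fun A B => forall₂_congr fun x hx => ?_
  have hcomp := differentiableAt_pi.1 (hφ x hx)
  rw [pullbackForm_fderiv_proj (hφ x hx), dualPairing_fderiv_eq_zero_iff (hcomp A) (hcomp B)]

theorem phwc_iff_comp_holom_fun_phwc_general {n : ℕ} (U : Set E)
    (φ : E → (Fin n → ℂ)) (hφ : ∀ x ∈ U, DifferentiableAt ℝ φ x) :
    PHWCOn φ U ↔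
    ∀ V : Set (Fin n → ℂ), IsOpen V → ∀ ψ : (Fin n → ℂ) → ℂ, DifferentiableOn ℂ ψ V →
      ∀ x ∈ U ∩ φ ⁻¹' V,
        ‖gradient (fun y => (ψ (φ y)).re) x‖ ^ 2 = ‖gradient (fun y => (ψ (φ y)).im) x‖ ^ 2 ∧
        ⟪gradient (fun y => (ψ (φ y)).re) x, gradient (fun y => (ψ (φ y)).im) x⟫ = 0 := by
  rw [phwcOn_iff_pullbackForm_fderiv_eq_zero hφ]
  constructor
  · intro h V hV ψ hψ x ⟨hxU, hxV⟩
    rw [← pullbackForm_fderiv_self_eq_zero_iff (hφ x hxU)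
      (hψ.differentiableAt (hV.mem_nhds hxV)), h x hxU]
    rfl
  · intro h x hx
    refine (pullbackForm_eq_zero_iff_self _).2 fun ℓ => ?_
    have hℓ := (pullbackForm_fderiv_self_eq_zero_iff (hφ x hx) ℓ.differentiableAt).2
      (h Set.univ isOpen_univ ℓ ℓ.differentiable.differentiableOn x ⟨hx, trivial⟩)
    rwa [ℓ.fderiv] at hℓ

end PHWC

/-- A differentiable map `φ : U → ℂⁿ` is pseudo-horizontally weakly conformal if and only if,
for every open set `V ⊆ ℂⁿ` and every holomorphic function `ψ : V → ℂ`, the composition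
`ψ ∘ φ` is pseudo-horizontally weakly conformal on `φ⁻¹(V)`. -/
theorem phwc_iff_comp_holom_fun_phwc {E : Type*} [NormedAddCommGroup E]
    [InnerProductSpace ℝ E] [FiniteDimensional ℝ E] {n : ℕ}
    (U : Set E) (hU : IsOpen U) (hUne : U.Nonempty)
    (φ : E → (Fin n → ℂ)) (hφ : DifferentiableOn ℝ φ U) :
    PHWCOn φ U ↔
    ∀ V : Set (Fin n → ℂ), IsOpen V → ∀ ψ : (Fin n → ℂ) → ℂ, DifferentiableOn ℂ ψ V →
      ∀ x ∈ U ∩ φ ⁻¹' V,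
        ‖gradient (fun y => (ψ (φ y)).re) x‖ ^ 2 = ‖gradient (fun y => (ψ (φ y)).im) x‖ ^ 2 ∧
        ⟪gradient (fun y => (ψ (φ y)).re) x, gradient (fun y => (ψ (φ y)).im) x⟫ = 0 :=
  phwc_iff_comp_holom_fun_phwc_general U φ fun _ hx => hφ.differentiableAt (hU.mem_nhds hx)
end

section
/- Let E be a finite-dimensional real inner product space, U ⊆ E a nonempty open set, p ≥ 1 an integer, and φ : U → ℂⁿ a differentiable map. Then φ is pseudo-horizontally weakly conformal if and only if for every open set V ⊆ ℂⁿ and every holomorphic map ψ : V → ℂᵖ, the composition ψ∘φ : φ⁻¹(V) → ℂᵖ is pseudo-horizontally weakly conformal. -/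
/-!
Extend the inner product of the dual of `E` complex-bilinearly to the real-linear maps `E → ℂ`. The
two real equations of pseudo-horizontal weak conformality say that this form vanishes on every pair
of differentials `dφ^A`, `dφ^B`, hence on their complex span, which consists of all `ℓ ∘ dφ` with
`ℓ` complex-linear. For holomorphic `ψ`, the differential `dψ` is complex-linear, so every
`ℓ ∘ d(ψ ∘ φ) = (ℓ ∘ dψ) ∘ dφ` lies in this span. Conversely, taking `ψ = ℓ(·) w` with `w ≠ 0`
fixed and `ℓ` an arbitrary complex-linear functional shows that the form vanishes on each pair
`(ℓ ∘ dφ, ℓ ∘ dφ)`, and polarization gives its vanishing on all pairs `(ℓ ∘ dφ, m ∘ dφ)`.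
-/

open scoped RealInnerProductSpace

section ComplexCometric

open InnerProductSpace

variable {E F G : Type*} [NormedAddCommGroup E] [InnerProductSpace ℝ E] [CompleteSpace E]
  [NormedAddCommGroup F] [NormedSpace ℝ F] [NormedSpace ℂ F] [IsScalarTower ℝ ℂ F]
  [NormedAddCommGroup G] [NormedSpace ℝ G] [NormedSpace ℂ G] [IsScalarTower ℝ ℂ G]

/-- The complex-bilinear (not sesquilinear) extension of the inner product on the dual of `E` to the
complexified dual, which is encoded as the space of real-linear maps `E → ℂ`. It sends `(L, M)` to
`L a + i L b`, where `a` and `b` are the Riesz representatives of `re M` and `im M`; in this form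
linearity in `L` is immediate. -/
noncomputable def complexCometric : LinearMap.BilinForm ℂ (E →L[ℝ] ℂ) :=
  LinearMap.mk₂ ℂ
    (fun L M => L ((toDual ℝ E).symm (Complex.reCLM ∘L M)) +
      Complex.I * L ((toDual ℝ E).symm (Complex.imCLM ∘L M)))
    (fun L L' M => by simp only [add_apply]; ring)
    (fun c L M => by simp only [smul_apply, smul_eq_mul]; ring)
    (fun L M M' => by simp only [ContinuousLinearMap.comp_add, map_add]; ring)
    (fun c L M => by
      have re_smul : Complex.reCLM ∘L (c • M) =
          c.re • (Complex.reCLM ∘L M) - c.im • (Complex.imCLM ∘L M) := by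
        ext v; simp
      have im_smul : Complex.imCLM ∘L (c • M) =
          c.re • (Complex.imCLM ∘L M) + c.im • (Complex.reCLM ∘L M) := by
        ext v; simp
      simp only [re_smul, im_smul, map_add, map_sub, map_smul, Complex.real_smul, smul_eq_mul]
      linear_combination
        (L ((toDual ℝ E).symm (Complex.reCLM ∘L M)) +
          Complex.I * L ((toDual ℝ E).symm (Complex.imCLM ∘L M))) * Complex.re_add_im c -
        c.im * L ((toDual ℝ E).symm (Complex.imCLM ∘L M)) * Complex.I_sq)

lemma complexCometric_re (L M : E →L[ℝ] ℂ) :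
    (complexCometric L M).re =
      ⟪(toDual ℝ E).symm (Complex.reCLM ∘L L), (toDual ℝ E).symm (Complex.reCLM ∘L M)⟫ -
        ⟪(toDual ℝ E).symm (Complex.imCLM ∘L L), (toDual ℝ E).symm (Complex.imCLM ∘L M)⟫ := by
  simp [complexCometric, toDual_symm_apply, sub_eq_add_neg]

lemma complexCometric_im (L M : E →L[ℝ] ℂ) :
    (complexCometric L M).im =
      ⟪(toDual ℝ E).symm (Complex.imCLM ∘L L), (toDual ℝ E).symm (Complex.reCLM ∘L M)⟫ +
        ⟪(toDual ℝ E).symm (Complex.reCLM ∘L L), (toDual ℝ E).symm (Complex.imCLM ∘L M)⟫ := by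
  simp [complexCometric, toDual_symm_apply]

lemma complexCometric_isSymm : (complexCometric (E := E)).IsSymm where
  eq L M := by
    apply Complex.ext
    · simp only [complexCometric_re, real_inner_comm]
    · rw [complexCometric_im, complexCometric_im, add_comm]
      congr 1 <;> exact real_inner_comm _ _

/-- The transpose of a real-linear map `D` into a complex space, from the complex dual of `F` to the
complexified dual of `E`. -/
noncomputable def complexDualMap (D : E →L[ℝ] F) : (F →L[ℂ] ℂ) →ₗ[ℂ] (E →L[ℝ] ℂ) where
  toFun ℓ := ℓ.restrictScalars ℝ ∘L D
  map_add' _ _ := rfl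
  map_smul' _ _ := rfl

/-- The push-forward of `complexCometric` along a real-linear map `D` into a complex space, as a
form on the complex dual of `F`. Its vanishing is the coordinate-free form of pseudo-horizontal weak
conformality of `D`. -/
noncomputable def cometricPushforward (D : E →L[ℝ] F) : LinearMap.BilinForm ℂ (F →L[ℂ] ℂ) :=
  complexCometric.compl₁₂ (complexDualMap D) (complexDualMap D)

lemma cometricPushforward_comp_apply (T : F →L[ℂ] G) (D : E →L[ℝ] F) (ℓ m : G →L[ℂ] ℂ) :
    cometricPushforward (T.restrictScalars ℝ ∘L D) ℓ m =
      cometricPushforward D (ℓ ∘L T) (m ∘L T) :=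
  rfl

lemma cometricPushforward_isSymm (D : E →L[ℝ] F) : (cometricPushforward D).IsSymm where
  eq _ _ := complexCometric_isSymm.eq _ _

lemma cometricPushforward_comp_eq_zero {D : E →L[ℝ] F} (hD : cometricPushforward D = 0)
    (T : F →L[ℂ] G) : cometricPushforward (T.restrictScalars ℝ ∘L D) = 0 := by
  ext ℓ m
  simp only [cometricPushforward_comp_apply, hD, LinearMap.zero_apply]

lemma cometricPushforward_eq_zero_of_forall_comp [Nontrivial G] {D : E →L[ℝ] F}
    (h : ∀ T : F →L[ℂ] G, cometricPushforward (T.restrictScalars ℝ ∘L D) = 0) :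
    cometricPushforward D = 0 := by
  obtain ⟨w, hw⟩ := exists_ne (0 : G)
  obtain ⟨k, hkw⟩ := SeparatingDual.exists_eq_one (R := ℂ) hw
  refine LinearMap.BilinForm.ext_of_isSymm (cometricPushforward_isSymm D)
    LinearMap.BilinForm.isSymm_zero fun ℓ => ?_
  have hℓ : k ∘L ℓ.smulRight w = ℓ := by
    ext v
    simp [hkw]
  calc cometricPushforward D ℓ ℓ
      = cometricPushforward ((ℓ.smulRight w).restrictScalars ℝ ∘L D) k k := by
        rw [cometricPushforward_comp_apply, hℓ]
    _ = 0 := LinearMap.congr_fun₂ (h _) k k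

lemma cometricPushforward_eq_zero_iff_proj {ι : Type*} [Fintype ι] {D : E →L[ℝ] (ι → ℂ)} :
    cometricPushforward D = 0 ↔ ∀ A B : ι,
      complexCometric (ContinuousLinearMap.proj A ∘L D) (ContinuousLinearMap.proj B ∘L D) = 0 := by
  classical
  constructor
  · intro h A B
    exact LinearMap.congr_fun₂ h (ContinuousLinearMap.proj A) (ContinuousLinearMap.proj B)
  · intro h
    have vanish_proj (A B : ι) : cometricPushforward D (ContinuousLinearMap.proj A)
        (ContinuousLinearMap.proj B) = 0 := h A B
    have eq_sum_proj (ℓ : (ι → ℂ) →L[ℂ] ℂ) :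
        ℓ = ∑ A, ℓ (Pi.single A 1) • ContinuousLinearMap.proj A := by
      ext z
      conv_lhs => rw [pi_eq_sum_univ' z]
      simp [mul_comm]
    ext ℓ m
    rw [eq_sum_proj ℓ, eq_sum_proj m]
    simp only [map_sum, map_smul, LinearMap.sum_apply, LinearMap.smul_apply, vanish_proj, smul_zero,
      Finset.sum_const_zero, LinearMap.zero_apply]

end ComplexCometric

section PHWC

variable {E : Type*} [NormedAddCommGroup E] [InnerProductSpace ℝ E] [CompleteSpace E]

lemma gradient_clm_comp {F : Type*} [NormedAddCommGroup F] [NormedSpace ℝ F] {f : E → F} {x : E}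
    (hf : DifferentiableAt ℝ f x) (L : F →L[ℝ] ℝ) :
    gradient (fun y => L (f y)) x = (InnerProductSpace.toDual ℝ E).symm (L ∘L fderiv ℝ f x) :=
  (L.hasFDerivAt.comp x hf.hasFDerivAt).hasGradientAt.gradient

lemma complexCometric_fderiv_eq_zero_iff {f g : E → ℂ} {x : E} (hf : DifferentiableAt ℝ f x)
    (hg : DifferentiableAt ℝ g x) :
    complexCometric (fderiv ℝ f x) (fderiv ℝ g x) = 0 ↔
      ⟪gradient (fun y => (f y).re) x, gradient (fun y => (g y).re) x⟫ -
        ⟪gradient (fun y => (f y).im) x, gradient (fun y => (g y).im) x⟫ = 0 ∧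
      ⟪gradient (fun y => (f y).im) x, gradient (fun y => (g y).re) x⟫ +
        ⟪gradient (fun y => (f y).re) x, gradient (fun y => (g y).im) x⟫ = 0 := by
  have gradient_re {h : E → ℂ} (hh : DifferentiableAt ℝ h x) :
      gradient (fun y => (h y).re) x =
        (InnerProductSpace.toDual ℝ E).symm (Complex.reCLM ∘L fderiv ℝ h x) :=
    gradient_clm_comp hh Complex.reCLM
  have gradient_im {h : E → ℂ} (hh : DifferentiableAt ℝ h x) :
      gradient (fun y => (h y).im) x =
        (InnerProductSpace.toDual ℝ E).symm (Complex.imCLM ∘L fderiv ℝ h x) :=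
    gradient_clm_comp hh Complex.imCLM
  rw [Complex.ext_iff, complexCometric_re, complexCometric_im, gradient_re hf, gradient_re hg,
    gradient_im hf, gradient_im hg, Complex.zero_re, Complex.zero_im]

lemma phwcOn_iff_cometricPushforward_fderiv_eq_zero {n : ℕ} {φ : E → Fin n → ℂ} {U : Set E}
    (hφ : ∀ x ∈ U, DifferentiableAt ℝ φ x) :
    PHWCOn φ U ↔ ∀ x ∈ U, cometricPushforward (fderiv ℝ φ x) = 0 := by
  have differentiableAt_component {x : E} (hx : x ∈ U) (A : Fin n) :
      DifferentiableAt ℝ (fun y => φ y A) x :=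
    differentiableAt_pi.1 (hφ x hx) A
  calc PHWCOn φ U
      ↔ ∀ A B : Fin n, ∀ x ∈ U, complexCometric (fderiv ℝ (fun y => φ y A) x)
          (fderiv ℝ (fun y => φ y B) x) = 0 :=
        forall₄_congr fun A B _ hx => (complexCometric_fderiv_eq_zero_iff
          (differentiableAt_component hx A) (differentiableAt_component hx B)).symm
    _ ↔ ∀ x ∈ U, ∀ A B : Fin n, complexCometric (fderiv ℝ (fun y => φ y A) x)
          (fderiv ℝ (fun y => φ y B) x) = 0 :=
        ⟨fun h x hx A B => h A B x hx, fun h A B x hx => h x hx A B⟩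
    _ ↔ ∀ x ∈ U, cometricPushforward (fderiv ℝ φ x) = 0 :=
        forall₂_congr fun x hx => by
          simp only [fderiv_apply (hφ x hx), cometricPushforward_eq_zero_iff_proj]

lemma phwcOn_comp_iff {n p : ℕ} {φ : E → Fin n → ℂ} {ψ : (Fin n → ℂ) → Fin p → ℂ} {U : Set E}
    (hφ : ∀ x ∈ U, DifferentiableAt ℝ φ x) (hψ : ∀ x ∈ U, DifferentiableAt ℂ ψ (φ x)) :
    PHWCOn (fun y => ψ (φ y)) U ↔ ∀ x ∈ U,
      cometricPushforward ((fderiv ℂ ψ (φ x)).restrictScalars ℝ ∘L fderiv ℝ φ x) = 0 := by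
  have chain_rule (x : E) (hx : x ∈ U) : HasFDerivAt (fun y => ψ (φ y))
      ((fderiv ℂ ψ (φ x)).restrictScalars ℝ ∘L fderiv ℝ φ x) x :=
    ((hψ x hx).hasFDerivAt.restrictScalars ℝ).comp x (hφ x hx).hasFDerivAt
  rw [phwcOn_iff_cometricPushforward_fderiv_eq_zero fun x hx => (chain_rule x hx).differentiableAt]
  exact forall₂_congr fun x hx => by rw [(chain_rule x hx).fderiv]

theorem phwc_iff_comp_holom_map_phwc_general {n p : ℕ} (hp : 1 ≤ p) {U : Set E}
    {φ : E → (Fin n → ℂ)} (hφ : ∀ x ∈ U, DifferentiableAt ℝ φ x) :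
    PHWCOn φ U ↔
    ∀ V : Set (Fin n → ℂ), IsOpen V → ∀ ψ : (Fin n → ℂ) → (Fin p → ℂ),
      DifferentiableOn ℂ ψ V → PHWCOn (fun y => ψ (φ y)) (U ∩ φ ⁻¹' V) := by
  have : NeZero p := ⟨Nat.one_le_iff_ne_zero.mp hp⟩
  rw [phwcOn_iff_cometricPushforward_fderiv_eq_zero hφ]
  constructor
  · intro h V hV ψ hψ
    exact (phwcOn_comp_iff (fun x hx => hφ x hx.1)
      fun x hx => hψ.differentiableAt (hV.mem_nhds hx.2)).2
        fun x hx => cometricPushforward_comp_eq_zero (h x hx.1) _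
  · intro h x hx
    refine cometricPushforward_eq_zero_of_forall_comp (G := Fin p → ℂ) fun T => ?_
    have hT := h Set.univ isOpen_univ T T.differentiable.differentiableOn
    rw [Set.preimage_univ, Set.inter_univ,
      phwcOn_comp_iff hφ fun _ _ => T.differentiableAt] at hT
    simpa only [T.fderiv] using hT x hx

end PHWC

/-- A differentiable map `φ : U → ℂⁿ` is pseudo-horizontally weakly conformal if and only if,
for every open set `V ⊆ ℂⁿ` and every holomorphic map `ψ : V → ℂᵖ`, the composition
`ψ ∘ φ` is pseudo-horizontally weakly conformal on `φ⁻¹(V)`. -/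
theorem phwc_iff_comp_holom_map_phwc {E : Type*} [NormedAddCommGroup E]
    [InnerProductSpace ℝ E] [FiniteDimensional ℝ E] {n : ℕ}
    (U : Set E) (hU : IsOpen U) (hUne : U.Nonempty)
    (p : ℕ) (hp : 1 ≤ p)
    (φ : E → (Fin n → ℂ)) (hφ : DifferentiableOn ℝ φ U) :
    PHWCOn φ U ↔
    ∀ V : Set (Fin n → ℂ), IsOpen V → ∀ ψ : (Fin n → ℂ) → (Fin p → ℂ),
      DifferentiableOn ℂ ψ V → PHWCOn (fun y => ψ (φ y)) (U ∩ φ ⁻¹' V) :=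
  phwc_iff_comp_holom_map_phwc_general hp fun _ hx => hφ.differentiableAt (hU.mem_nhds hx)
end

section
/- Let E be a finite-dimensional real inner product space, U ⊆ E a nonempty open set, and φ : U → ℂⁿ a C² map. Then φ is a pseudo harmonic morphism (i.e. φ is harmonic and pseudo-horizontally weakly conformal) if and only if for every open set V ⊆ ℂⁿ and every holomorphic function ψ : V → ℂ, the real and imaginary parts of ψ∘φ are harmonic on the open set φ⁻¹(V). -/
/-!
The chain rule reads `Δ(ψ ∘ φ) = dψ(Δφ) + ∑_{A,B} ⟨∇φ^A, ∇φ^B⟩ ∂_A∂_Bψ`, where `⟨·,·⟩` is extended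
complex-bilinearly, and pseudo-horizontal weak conformality says exactly that the products
`⟨∇φ^A, ∇φ^B⟩` vanish; so a pseudo harmonic morphism pulls holomorphic functions back to harmonic
ones. Conversely, the coordinate functions `z_k` show that `φ` is harmonic, and then the products
`z_A z_B` give `0 = Δ(φ^A φ^B) = 2 ⟨∇φ^A, ∇φ^B⟩`.

The chain rule needs second derivatives of a holomorphic `ψ` of several variables. By the Schwarz
lemma the Taylor remainder of a bounded holomorphic map is quadratically small, with a constant
uniform in the centre, so its difference quotients converge locally uniformly, and by Weierstrass'
theorem the directional derivatives of a holomorphic map are again holomorphic.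
-/

open scoped RealInnerProductSpace

open Metric Complex Filter Topology Laplacian ContDiff

theorem exists_pos_forall_mem_ball_ball_subset {X : Type*} [PseudoMetricSpace X] {c : X} {U : Set X}
    (hU : U ∈ 𝓝 c) : ∃ r > 0, ∀ x ∈ ball c r, ball x r ⊆ U := by
  obtain ⟨ε, hε, hεU⟩ := Metric.mem_nhds_iff.1 hU
  refine ⟨ε / 2, half_pos hε, fun x hx => (ball_subset_ball' ?_).trans hεU⟩
  linarith [mem_ball.1 hx]

theorem eventually_norm_smul_lt {𝕜 G : Type*} [NormedField 𝕜] [SeminormedAddCommGroup G]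
    [NormedSpace 𝕜 G] {r : ℝ} (hr : 0 < r) (v : G) : ∀ᶠ t : 𝕜 in 𝓝 0, ‖t • v‖ < r :=
  (Continuous.tendsto (by fun_prop) (0 : 𝕜)).eventually_lt_const (by simpa using hr)

section Holomorphic

variable {G F : Type*} [NormedAddCommGroup G] [NormedSpace ℂ G]
  [NormedAddCommGroup F] [NormedSpace ℂ F] {f : G → F} {c z : G} {r M : ℝ}

theorem norm_fderiv_le_of_forall_mem_ball_norm_le (hr : 0 < r)
    (hf : DifferentiableOn ℂ f (ball c r)) (hM : ∀ z ∈ ball c r, ‖f z‖ ≤ M) :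
    ‖fderiv ℂ f c‖ ≤ 2 * M / r := by
  refine norm_fderiv_le_div_of_mapsTo_ball hf (fun z hz => mem_closedBall_iff_norm.2 ?_) hr
  linarith [norm_sub_le (f z) (f c), hM z hz, hM c (mem_ball_self hr)]

-- The Schwarz lemma for maps vanishing to second order, applied to the Taylor remainder.
theorem norm_sub_sub_fderiv_le_of_forall_mem_ball_norm_le
    (hf : DifferentiableOn ℂ f (ball c r)) (hM : ∀ z ∈ ball c r, ‖f z‖ ≤ M) (hz : z ∈ ball c r) :
    ‖f z - f c - fderiv ℂ f c (z - c)‖ ≤ 4 * M * (‖z - c‖ / r) ^ 2 := by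
  have hr : 0 < r := pos_of_mem_ball hz
  set R : G → F := fun w => f w - f c - fderiv ℂ f c (w - c) with hR
  have hRc : R c = 0 := by simp [hR]
  have hRM : Set.MapsTo R (ball c r) (closedBall (R c) (4 * M)) := fun w hw => by
    have hlin : ‖fderiv ℂ f c (w - c)‖ ≤ 2 * M := by
      have hf' := norm_fderiv_le_of_forall_mem_ball_norm_le hr hf hM
      calc ‖fderiv ℂ f c (w - c)‖ ≤ 2 * M / r * r :=
            (fderiv ℂ f c).le_of_opNorm_le_of_le hf' (mem_ball_iff_norm.1 hw).le
        _ = 2 * M := div_mul_cancel₀ _ hr.ne'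
    rw [hRc, mem_closedBall_zero_iff]
    linarith [norm_sub_le (f w - f c) (fderiv ℂ f c (w - c)), norm_sub_le (f w) (f c),
      hM w hw, hM c (mem_ball_self hr)]
  have hRo : (R · - R c) =o[𝓝 c] fun w => ‖w - c‖ ^ 1 := by
    simpa only [hRc, sub_zero, pow_one] using
      (hf.differentiableAt (ball_mem_nhds c hr)).hasFDerivAt.isLittleO.norm_right
  simpa [hRc, dist_eq_norm] using dist_le_mul_div_pow_of_mapsTo_ball_of_isLittleO
    (hf.sub_const _ |>.sub (by fun_prop)) hRM hRo hz

theorem uniformCauchySeqOn_fderiv {ι : Type*} {l : Filter ι} {f : ι → G → F} {S U : Set G}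
    (hr : 0 < r) (hSU : ∀ x ∈ S, ball x r ⊆ U) (hf : ∀ᶠ i in l, DifferentiableOn ℂ (f i) U)
    (hcauchy : UniformCauchySeqOn f l U) :
    UniformCauchySeqOn (fun i => fderiv ℂ (f i)) l S := by
  intro u hu
  obtain ⟨ε, hε, hεu⟩ := Metric.mem_uniformity_dist.1 hu
  filter_upwards [hcauchy _ (dist_mem_uniformity (by positivity : 0 < ε * r / 4)), hf.prod_mk hf]
    with ⟨i, j⟩ hij ⟨hi, hj⟩ x hx
  have hdiff : ∀ {k}, DifferentiableOn ℂ (f k) U → DifferentiableAt ℂ (f k) x := fun hk =>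
    (hk.mono (hSU x hx)).differentiableAt (ball_mem_nhds x hr)
  have hbound := norm_fderiv_le_of_forall_mem_ball_norm_le hr ((hi.sub hj).mono (hSU x hx))
    fun z hz => by simpa [dist_eq_norm] using (hij z (hSU x hx hz)).le
  apply hεu
  calc dist (fderiv ℂ (f i) x) (fderiv ℂ (f j) x) = ‖fderiv ℂ (f i - f j) x‖ := by
        rw [fderiv_sub (hdiff hi) (hdiff hj), dist_eq_norm]
    _ ≤ 2 * (ε * r / 4) / r := hbound
    _ = ε / 2 := by field
    _ < ε := half_lt_self hε

theorem differentiableOn_of_tendstoUniformlyOn [CompleteSpace F] {ι : Type*} {l : Filter ι}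
    [l.NeBot] {f : ι → G → F} {g : G → F} {U : Set G} (hU : IsOpen U)
    (hf : ∀ᶠ i in l, DifferentiableOn ℂ (f i) U) (hfg : TendstoUniformlyOn f g l U) :
    DifferentiableOn ℂ g U := by
  intro c hc
  obtain ⟨r, hr, hball⟩ := exists_pos_forall_mem_ball_ball_subset (hU.mem_nhds hc)
  have hcauchy := uniformCauchySeqOn_fderiv hr hball hf hfg.uniformCauchySeqOn
  have hlim : ∀ x ∈ ball c r, ∃ L, Tendsto (fun i => fderiv ℂ (f i) x) l (𝓝 L) := fun x hx =>
    CompleteSpace.complete (hcauchy.cauchy_map hx)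
  choose! g' hg' using hlim
  have hnhds : ∀ᶠ x in 𝓝 c, x ∈ U := hU.mem_nhds hc
  have hfderiv : ∀ᶠ p : ι × G in l ×ˢ 𝓝 c, HasFDerivAt (f p.1) (fderiv ℂ (f p.1) p.2) p.2 := by
    filter_upwards [hf.prod_mk hnhds] with p ⟨hp, hpU⟩
    exact (hp.differentiableAt (hU.mem_nhds hpU)).hasFDerivAt
  exact (hasFDerivAt_of_tendstoUniformlyOnFilter
    ((hcauchy.tendstoUniformlyOn_of_tendsto hg').tendstoUniformlyOnFilter.mono_right
      (le_principal_iff.2 (ball_mem_nhds c hr)))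
    hfderiv (hnhds.mono fun x hx => hfg.tendsto_at hx)).differentiableAt.differentiableWithinAt

theorem tendstoUniformlyOn_inv_smul_sub_fderiv {S : Set G} (hr : 0 < r)
    (hf : ∀ x ∈ S, DifferentiableOn ℂ f (ball x r)) (hM : ∀ x ∈ S, ∀ z ∈ ball x r, ‖f z‖ ≤ M)
    (v : G) :
    TendstoUniformlyOn (fun (t : ℂ) x => t⁻¹ • (f (x + t • v) - f x)) (fun x => fderiv ℂ f x v)
      (𝓝[≠] 0) S := by
  have hsmall : Tendsto (fun t : ℂ => 4 * M * (‖v‖ / r) ^ 2 * ‖t‖) (𝓝[≠] 0) (𝓝 0) :=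
    tendsto_nhdsWithin_of_tendsto_nhds (by
      simpa using (continuous_norm (E := ℂ)).tendsto 0 |>.const_mul (4 * M * (‖v‖ / r) ^ 2))
  rw [Metric.tendstoUniformlyOn_iff]
  intro ε hε
  filter_upwards [hsmall.eventually_lt_const hε, nhdsWithin_le_nhds (eventually_norm_smul_lt hr v),
    self_mem_nhdsWithin] with t htε htr ht x hx
  have ht0 : t ≠ 0 := ht
  have htaylor := norm_sub_sub_fderiv_le_of_forall_mem_ball_norm_le (z := x + t • v) (hf x hx)
    (hM x hx) (by simpa using htr)
  have hquot : t⁻¹ • (f (x + t • v) - f x) - fderiv ℂ f x v =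
      t⁻¹ • (f (x + t • v) - f x - fderiv ℂ f x (x + t • v - x)) := by
    rw [add_sub_cancel_left, map_smul, smul_sub _ (_ - _), inv_smul_smul₀ ht0]
  calc dist (fderiv ℂ f x v) (t⁻¹ • (f (x + t • v) - f x))
      = ‖t‖⁻¹ * ‖f (x + t • v) - f x - fderiv ℂ f x (x + t • v - x)‖ := by
        rw [dist_comm, dist_eq_norm, hquot, norm_smul, norm_inv]
    _ ≤ ‖t‖⁻¹ * (4 * M * (‖x + t • v - x‖ / r) ^ 2) := by gcongr
    _ = 4 * M * (‖v‖ / r) ^ 2 * ‖t‖ := by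
        have htnorm := norm_ne_zero_iff.2 ht0
        rw [add_sub_cancel_left, norm_smul]
        field_simp
    _ < ε := htε

theorem differentiableOn_fderiv_apply [CompleteSpace F] {V : Set G} (hV : IsOpen V)
    (hf : DifferentiableOn ℂ f V) (v : G) : DifferentiableOn ℂ (fun x => fderiv ℂ f x v) V := by
  intro c hc
  have hbounded : ∀ᶠ z in 𝓝 c, z ∈ V ∧ ‖f z‖ ≤ ‖f c‖ + 1 :=
    (hV.eventually_mem hc).and ((hf.continuousOn.continuousAt
      (hV.mem_nhds hc)).norm.eventually_le_const (lt_add_one _))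
  obtain ⟨r, hr, hball⟩ := exists_pos_forall_mem_ball_ball_subset hbounded
  have hquot : ∀ᶠ t : ℂ in 𝓝[≠] 0,
      DifferentiableOn ℂ (fun x => t⁻¹ • (f (x + t • v) - f x)) (ball c r) := by
    filter_upwards [nhdsWithin_le_nhds (eventually_norm_smul_lt hr v)] with t ht
    refine ((hf.comp (by fun_prop) fun x hx => ?_).sub (hf.mono fun x hx => ?_)).const_smul t⁻¹
    · exact (hball x hx (by simpa using ht)).1
    · exact (hball x hx (mem_ball_self hr)).1
  have hlim := tendstoUniformlyOn_inv_smul_sub_fderiv hr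
    (fun x hx => hf.mono fun z hz => (hball x hx hz).1) (fun x hx z hz => (hball x hx hz).2) v
  exact ((differentiableOn_of_tendstoUniformlyOn isOpen_ball hquot hlim).differentiableAt
    (ball_mem_nhds c hr)).differentiableWithinAt

theorem contDiffOn_infty_of_differentiableOn_complex [FiniteDimensional ℂ G] [CompleteSpace F]
    {V : Set G} (hV : IsOpen V) (hf : DifferentiableOn ℂ f V) : ContDiffOn ℂ ∞ f V := by
  refine contDiffOn_infty.2 fun n => ?_
  induction n generalizing f with
  | zero => exact contDiffOn_zero.2 hf.continuousOn
  | succ n ih =>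
    rw [Nat.cast_succ, contDiffOn_succ_iff_fderiv_of_isOpen hV, contDiffOn_clm_apply]
    exact ⟨hf, by simp, fun v => ih (differentiableOn_fderiv_apply hV hf v)⟩

end Holomorphic

section SecondDerivative

theorem differentiableAt_fderiv_of_contDiffAt_two {𝕜 E F : Type*} [NontriviallyNormedField 𝕜]
    [NormedAddCommGroup E] [NormedSpace 𝕜 E] [NormedAddCommGroup F] [NormedSpace 𝕜 F]
    {f : E → F} {x : E} (hf : ContDiffAt 𝕜 2 f x) : DifferentiableAt 𝕜 (fderiv 𝕜 f) x :=
  (hf.fderiv_right (m := 1) (by norm_num)).differentiableAt one_ne_zero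

variable {E F H : Type*} [NormedAddCommGroup E] [NormedSpace ℝ E]
  [NormedAddCommGroup F] [NormedSpace ℝ F] [NormedAddCommGroup H] [NormedSpace ℝ H] {x : E}

theorem fderiv_fderiv_comp_apply {𝕜 : Type*} [NontriviallyNormedField 𝕜] [NormedAlgebra ℝ 𝕜]
    [NormedSpace 𝕜 F] [IsScalarTower ℝ 𝕜 F] [NormedSpace 𝕜 H] [IsScalarTower ℝ 𝕜 H]
    {f : E → F} {g : F → H} (hf : ContDiffAt ℝ 2 f x) (hg : ContDiffAt 𝕜 2 g (f x)) (v w : E) :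
    fderiv ℝ (fderiv ℝ (g ∘ f)) x v w =
      fderiv 𝕜 g (f x) (fderiv ℝ (fderiv ℝ f) x v w) +
        fderiv 𝕜 (fderiv 𝕜 g) (f x) (fderiv ℝ f x v) (fderiv ℝ f x w) := by
  have hfderiv : fderiv ℝ (g ∘ f) =ᶠ[𝓝 x]
      fun y => ((fderiv 𝕜 g (f y)).restrictScalars ℝ).comp (fderiv ℝ f y) := by
    filter_upwards [hf.eventually (by simp),
      hf.continuousAt.eventually (hg.eventually (by simp))] with y hfy hgy
    exact (((hgy.differentiableAt two_ne_zero).hasFDerivAt.restrictScalars ℝ).comp y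
      (hfy.differentiableAt two_ne_zero).hasFDerivAt).fderiv
  have houter : HasFDerivAt (fun y => (fderiv 𝕜 g (f y)).restrictScalars ℝ)
      ((ContinuousLinearMap.restrictScalarsL 𝕜 F H ℝ ℝ).comp
        (((fderiv 𝕜 (fderiv 𝕜 g) (f x)).restrictScalars ℝ).comp (fderiv ℝ f x))) x :=
    (ContinuousLinearMap.restrictScalarsL 𝕜 F H ℝ ℝ).hasFDerivAt.comp x
      (((differentiableAt_fderiv_of_contDiffAt_two hg).hasFDerivAt.restrictScalars ℝ).comp x
        (hf.differentiableAt two_ne_zero).hasFDerivAt)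
  have hinner := (differentiableAt_fderiv_of_contDiffAt_two hf).hasFDerivAt
  have hcomp := houter.clm_comp hinner
  rw [hfderiv.fderiv_eq, hcomp.fderiv]
  rfl

theorem fderiv_fderiv_mul_apply {𝔸 : Type*} [NormedCommRing 𝔸] [NormedAlgebra ℝ 𝔸]
    {f g : E → 𝔸} (hf : ContDiffAt ℝ 2 f x) (hg : ContDiffAt ℝ 2 g x) (v w : E) :
    fderiv ℝ (fderiv ℝ fun y => f y * g y) x v w =
      f x * fderiv ℝ (fderiv ℝ g) x v w + g x * fderiv ℝ (fderiv ℝ f) x v w +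
        (fderiv ℝ f x v * fderiv ℝ g x w + fderiv ℝ f x w * fderiv ℝ g x v) := by
  have hdir {h : E → 𝔸} (hh : ContDiffAt ℝ 2 h x) :
      HasFDerivAt (fun y => fderiv ℝ h y w) ((fderiv ℝ (fderiv ℝ h) x).flip w) x :=
    (ContinuousLinearMap.apply ℝ 𝔸 w).hasFDerivAt.comp x
      (differentiableAt_fderiv_of_contDiffAt_two hh).hasFDerivAt
  have hleibniz : (fun y => fderiv ℝ (fun z => f z * g z) y w) =ᶠ[𝓝 x]
      fun y => f y * fderiv ℝ g y w + g y * fderiv ℝ f y w := by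
    filter_upwards [hf.eventually (by simp), hg.eventually (by simp)] with y hfy hgy
    rw [fderiv_fun_mul (hfy.differentiableAt two_ne_zero) (hgy.differentiableAt two_ne_zero)]
    rfl
  have hf' := (hf.differentiableAt two_ne_zero).hasFDerivAt
  have hg' := (hg.differentiableAt two_ne_zero).hasFDerivAt
  have hsecond := (hdir (hf.mul hg)).unique
    (((hf'.mul (hdir hg)).add (hg'.mul (hdir hf))).congr_of_eventuallyEq hleibniz)
  refine (DFunLike.congr_fun hsecond v).trans ?_
  simp only [ContinuousLinearMap.flip_apply, _root_.add_apply, _root_.smul_apply, smul_eq_mul]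
  ring

end SecondDerivative

theorem contDiffOn_re_im_iff {E : Type*} [NormedAddCommGroup E] [NormedSpace ℝ E] {g : E → ℂ}
    {W : Set E} {n : WithTop ℕ∞} :
    ContDiffOn ℝ n (fun y => (g y).re) W ∧ ContDiffOn ℝ n (fun y => (g y).im) W ↔
      ContDiffOn ℝ n g W := by
  refine ⟨fun ⟨hre, him⟩ => ?_, fun h => ⟨reCLM.contDiff.comp_contDiffOn h,
    imCLM.contDiff.comp_contDiffOn h⟩⟩
  exact equivRealProdCLM.comp_contDiffOn_iff.1 (hre.prodMk him)

section Laplacian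

variable {E F : Type*} [NormedAddCommGroup E] [InnerProductSpace ℝ E] [FiniteDimensional ℝ E]
  [NormedAddCommGroup F] [NormedSpace ℝ F] {ι : Type*} [Fintype ι] {x : E}

theorem laplacian_eq_sum_fderiv_fderiv (b : OrthonormalBasis ι ℝ E) (f : E → F) (x : E) :
    Δ f x = ∑ i, fderiv ℝ (fderiv ℝ f) x (b i) (b i) := by
  simp [InnerProductSpace.laplacian_eq_iteratedFDeriv_orthonormalBasis f b,
    iteratedFDeriv_two_apply]

theorem laplacian_comp {𝕜 H : Type*} [NontriviallyNormedField 𝕜] [NormedAlgebra ℝ 𝕜]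
    [NormedSpace 𝕜 F] [IsScalarTower ℝ 𝕜 F] [NormedAddCommGroup H] [NormedSpace ℝ H]
    [NormedSpace 𝕜 H] [IsScalarTower ℝ 𝕜 H] (b : OrthonormalBasis ι ℝ E) {f : E → F} {g : F → H}
    (hf : ContDiffAt ℝ 2 f x) (hg : ContDiffAt 𝕜 2 g (f x)) :
    Δ (g ∘ f) x = fderiv 𝕜 g (f x) (Δ f x) +
      ∑ i, fderiv 𝕜 (fderiv 𝕜 g) (f x) (fderiv ℝ f x (b i)) (fderiv ℝ f x (b i)) := by
  simp only [laplacian_eq_sum_fderiv_fderiv b, fderiv_fderiv_comp_apply hf hg, map_sum,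
    Finset.sum_add_distrib]

theorem laplacian_mul {𝔸 : Type*} [NormedCommRing 𝔸] [NormedAlgebra ℝ 𝔸]
    (b : OrthonormalBasis ι ℝ E) {f g : E → 𝔸} (hf : ContDiffAt ℝ 2 f x)
    (hg : ContDiffAt ℝ 2 g x) :
    Δ (fun y => f y * g y) x =
      f x * Δ g x + g x * Δ f x + 2 * ∑ i, fderiv ℝ f x (b i) * fderiv ℝ g x (b i) := by
  simp only [laplacian_eq_sum_fderiv_fderiv b, fderiv_fderiv_mul_apply hf hg, Finset.mul_sum,
    ← Finset.sum_add_distrib]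
  exact Finset.sum_congr rfl fun i _ => by ring

theorem lap_eq_laplacian {f : E → ℝ} (hf : ContDiffAt ℝ 2 f x) : lap f x = Δ f x := by
  have hgrad : HasFDerivAt (gradient f) _ x :=
    (InnerProductSpace.toDual ℝ E).symm.toContinuousLinearEquiv.hasFDerivAt.comp x
      (differentiableAt_fderiv_of_contDiffAt_two hf).hasFDerivAt
  rw [lap, LinearMap.trace_eq_sum_inner _ (stdOrthonormalBasis ℝ E),
    laplacian_eq_sum_fderiv_fderiv (stdOrthonormalBasis ℝ E), hgrad.fderiv]
  refine Finset.sum_congr rfl fun i _ => ?_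
  rw [real_inner_comm]
  exact InnerProductSpace.toDual_symm_apply

theorem harmonicOn_re_im_iff {g : E → ℂ} {W : Set E} (hW : IsOpen W) :
    (HarmonicOn (fun y => (g y).re) W ∧ HarmonicOn (fun y => (g y).im) W) ↔
      ContDiffOn ℝ 2 g W ∧ ∀ x ∈ W, Δ g x = 0 := by
  have hlap (hg : ContDiffOn ℝ 2 g W) (x) (hx : x ∈ W) :
      lap (fun y => (g y).re) x = (Δ g x).re ∧ lap (fun y => (g y).im) x = (Δ g x).im := by
    have hgx := hg.contDiffAt (hW.mem_nhds hx)
    exact ⟨(lap_eq_laplacian (reCLM.contDiff.contDiffAt.comp x hgx)).trans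
        (hgx.laplacian_CLM_comp_left (l := reCLM)),
      (lap_eq_laplacian (imCLM.contDiff.contDiffAt.comp x hgx)).trans
        (hgx.laplacian_CLM_comp_left (l := imCLM))⟩
  constructor
  · rintro ⟨⟨hre, hre0⟩, him, him0⟩
    have hg := contDiffOn_re_im_iff.1 ⟨hre, him⟩
    refine ⟨hg, fun x hx => Complex.ext ?_ ?_⟩
    · exact (hlap hg x hx).1.symm.trans (hre0 x hx)
    · exact (hlap hg x hx).2.symm.trans (him0 x hx)
  · rintro ⟨hg, hg0⟩
    obtain ⟨hre, him⟩ := contDiffOn_re_im_iff.2 hg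
    refine ⟨⟨hre, fun x hx => ?_⟩, him, fun x hx => ?_⟩
    · rw [(hlap hg x hx).1, hg0 x hx, zero_re]
    · rw [(hlap hg x hx).2, hg0 x hx, zero_im]

end Laplacian

section Conformality

/-- The complex-bilinear (not sesquilinear) gradient product `⟨∇f, ∇g⟩` of two
complex-valued functions, where `∇f = ∇(re f) + i ∇(im f)`. -/
noncomputable def gradientProduct {E : Type*} [NormedAddCommGroup E] [InnerProductSpace ℝ E]
    [CompleteSpace E] (f g : E → ℂ) (x : E) : ℂ where
  re := ⟪gradient (fun y => (f y).re) x, gradient (fun y => (g y).re) x⟫ -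
    ⟪gradient (fun y => (f y).im) x, gradient (fun y => (g y).im) x⟫
  im := ⟪gradient (fun y => (f y).im) x, gradient (fun y => (g y).re) x⟫ +
    ⟪gradient (fun y => (f y).re) x, gradient (fun y => (g y).im) x⟫

theorem phwcOn_iff_gradientProduct_eq_zero {E : Type*} [NormedAddCommGroup E]
    [InnerProductSpace ℝ E] [CompleteSpace E] {n : ℕ} {φ : E → (Fin n → ℂ)} {U : Set E} :
    PHWCOn φ U ↔ ∀ A B, ∀ x ∈ U, gradientProduct (φ · A) (φ · B) x = 0 := by
  simp only [PHWCOn, Complex.ext_iff]; rfl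

theorem inner_gradient_gradient {E ι : Type*} [NormedAddCommGroup E] [InnerProductSpace ℝ E]
    [CompleteSpace E] [Fintype ι] (b : OrthonormalBasis ι ℝ E) (f g : E → ℝ) (x : E) :
    ⟪gradient f x, gradient g x⟫ = ∑ i, fderiv ℝ f x (b i) * fderiv ℝ g x (b i) := by
  rw [← b.sum_inner_mul_inner]
  refine Finset.sum_congr rfl fun i _ => ?_
  rw [inner_gradient_left, real_inner_comm, inner_gradient_left]

theorem gradientProduct_eq_sum {E ι : Type*} [NormedAddCommGroup E] [InnerProductSpace ℝ E]
    [CompleteSpace E] [Fintype ι] (b : OrthonormalBasis ι ℝ E) {f g : E → ℂ} {x : E}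
    (hf : DifferentiableAt ℝ f x) (hg : DifferentiableAt ℝ g x) :
    gradientProduct f g x = ∑ i, fderiv ℝ f x (b i) * fderiv ℝ g x (b i) := by
  have hre {h : E → ℂ} (hh : DifferentiableAt ℝ h x) (v) :
      fderiv ℝ (fun y => (h y).re) x v = (fderiv ℝ h x v).re :=
    DFunLike.congr_fun (reCLM.hasFDerivAt.comp x hh.hasFDerivAt).fderiv v
  have him {h : E → ℂ} (hh : DifferentiableAt ℝ h x) (v) :
      fderiv ℝ (fun y => (h y).im) x v = (fderiv ℝ h x v).im :=
    DFunLike.congr_fun (imCLM.hasFDerivAt.comp x hh.hasFDerivAt).fderiv v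
  apply Complex.ext
  · simp only [gradientProduct, inner_gradient_gradient b, hre hf, hre hg, him hf, him hg,
      re_sum, mul_re, Finset.sum_sub_distrib]
  · simp only [gradientProduct, inner_gradient_gradient b, hre hf, hre hg, him hf, him hg,
      im_sum, mul_im, Finset.sum_add_distrib]
    exact add_comm _ _

end Conformality

theorem bilinear_apply_eq_sum_sum_single {𝕜 ι H : Type*} [CommSemiring 𝕜] [Fintype ι]
    [DecidableEq ι] [AddCommMonoid H] [Module 𝕜 H] (L : (ι → 𝕜) →ₗ[𝕜] (ι → 𝕜) →ₗ[𝕜] H)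
    (v w : ι → 𝕜) :
    L v w = ∑ A, ∑ B, (v A * w B) • L (Pi.single A 1) (Pi.single B 1) := by
  simpa [Finsupp.sum_fintype, mul_smul] using
    (LinearMap.sum_repr_mul_repr_mul (Pi.basisFun 𝕜 ι) (Pi.basisFun 𝕜 ι) v w (B := L)).symm

section PHM

variable {E ι : Type*} [NormedAddCommGroup E] [InnerProductSpace ℝ E] [FiniteDimensional ℝ E]
  [Fintype ι] {x : E}

theorem laplacian_mul_eq_gradientProduct {f g : E → ℂ} (hf : ContDiffAt ℝ 2 f x)
    (hg : ContDiffAt ℝ 2 g x) :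
    Δ (fun y => f y * g y) x = f x * Δ g x + g x * Δ f x + 2 * gradientProduct f g x := by
  rw [laplacian_mul (stdOrthonormalBasis ℝ E) hf hg, gradientProduct_eq_sum
    (stdOrthonormalBasis ℝ E) (hf.differentiableAt two_ne_zero) (hg.differentiableAt two_ne_zero)]

theorem laplacian_comp_eq_sum_gradientProduct [DecidableEq ι] {H : Type*}
    [NormedAddCommGroup H] [NormedSpace ℂ H] {φ : E → ι → ℂ} {ψ : (ι → ℂ) → H}
    (hφ : ContDiffAt ℝ 2 φ x) (hψ : ContDiffAt ℂ 2 ψ (φ x)) :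
    Δ (ψ ∘ φ) x = fderiv ℂ ψ (φ x) (Δ φ x) + ∑ A, ∑ B, gradientProduct (φ · A) (φ · B) x •
      fderiv ℂ (fderiv ℂ ψ) (φ x) (Pi.single A 1) (Pi.single B 1) := by
  set b := stdOrthonormalBasis ℝ E
  have hφA (A : ι) : DifferentiableAt ℝ (φ · A) x :=
    differentiableAt_pi.1 (hφ.differentiableAt two_ne_zero) A
  have hφA' (v : E) (A : ι) : fderiv ℝ φ x v A = fderiv ℝ (φ · A) x v :=
    congrFun (DFunLike.congr_fun (fderiv_pi hφA) v) A
  have hL (v : E) : fderiv ℂ (fderiv ℂ ψ) (φ x) (fderiv ℝ φ x v) (fderiv ℝ φ x v) =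
      ∑ A, ∑ B, (fderiv ℝ (φ · A) x v * fderiv ℝ (φ · B) x v) •
        fderiv ℂ (fderiv ℂ ψ) (φ x) (Pi.single A 1) (Pi.single B 1) := by
    simp only [← hφA']
    exact bilinear_apply_eq_sum_sum_single (fderiv ℂ (fderiv ℂ ψ) (φ x)).toLinearMap₁₂ _ _
  simp only [laplacian_comp b hφ hψ, hL, gradientProduct_eq_sum b (hφA _) (hφA _), Finset.sum_smul]
  rw [Finset.sum_comm]
  exact congrArg _ (Finset.sum_congr rfl fun A _ => Finset.sum_comm)

theorem laplacian_pi_apply {F : Type*} [NormedAddCommGroup F] [NormedSpace ℝ F] {φ : E → ι → F}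
    (hφ : ContDiffAt ℝ 2 φ x) (k : ι) : Δ φ x k = Δ (φ · k) x :=
  (hφ.laplacian_CLM_comp_left
    (l := ContinuousLinearMap.proj (R := ℝ) (φ := fun _ : ι => F) k)).symm

variable {n : ℕ} {φ : E → Fin n → ℂ} {U : Set E}

theorem phmOn_iff_laplacian_gradientProduct_eq_zero (hU : IsOpen U) :
    PHMOn φ U ↔ ContDiffOn ℝ 2 φ U ∧
      ∀ x ∈ U, Δ φ x = 0 ∧ ∀ A B, gradientProduct (φ · A) (φ · B) x = 0 := by
  rw [PHMOn, phwcOn_iff_gradientProduct_eq_zero]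
  refine and_congr_right fun hφ => ?_
  have hlap : (∀ k, HarmonicOn (fun y => (φ y k).re) U ∧ HarmonicOn (fun y => (φ y k).im) U) ↔
      ∀ x ∈ U, Δ φ x = 0 := by
    simp only [harmonicOn_re_im_iff hU, funext_iff, Pi.zero_apply]
    refine ⟨fun h x hx k => ?_, fun h k => ⟨contDiffOn_pi.1 hφ k, fun x hx => ?_⟩⟩
    · rw [laplacian_pi_apply (hφ.contDiffAt (hU.mem_nhds hx)), (h k).2 x hx]
    · rw [← laplacian_pi_apply (hφ.contDiffAt (hU.mem_nhds hx)), h x hx]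
  rw [hlap]
  exact ⟨fun h x hx => ⟨h.1 x hx, fun A B => h.2 A B x hx⟩,
    fun h => ⟨fun x hx => (h x hx).1, fun A B x hx => (h x hx).2 A B⟩⟩

theorem PHMOn.harmonicOn_re_im_comp (hφ : PHMOn φ U) (hU : IsOpen U) {V : Set (Fin n → ℂ)}
    (hV : IsOpen V) {ψ : (Fin n → ℂ) → ℂ} (hψ : DifferentiableOn ℂ ψ V) :
    HarmonicOn (fun y => (ψ (φ y)).re) (U ∩ φ ⁻¹' V) ∧
      HarmonicOn (fun y => (ψ (φ y)).im) (U ∩ φ ⁻¹' V) := by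
  obtain ⟨hφ2, hφ0⟩ := (phmOn_iff_laplacian_gradientProduct_eq_zero hU).1 hφ
  have hψ2 : ContDiffOn ℂ 2 ψ V :=
    (contDiffOn_infty_of_differentiableOn_complex hV hψ).of_le (by norm_cast)
  rw [harmonicOn_re_im_iff (hφ2.continuousOn.isOpen_inter_preimage hU hV)]
  refine ⟨(hψ2.restrict_scalars ℝ).comp (hφ2.mono Set.inter_subset_left) fun x hx => hx.2, ?_⟩
  rintro x ⟨hxU, hxV⟩
  obtain ⟨hΔ, hgrad⟩ := hφ0 x hxU
  have hchain := laplacian_comp_eq_sum_gradientProduct (hφ2.contDiffAt (hU.mem_nhds hxU))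
    (hψ2.contDiffAt (hV.mem_nhds hxV))
  exact hchain.trans (by simp [hΔ, hgrad])

end PHM

theorem phm_iff_pullback_holom_harmonic_general {E : Type*} [NormedAddCommGroup E]
    [InnerProductSpace ℝ E] [FiniteDimensional ℝ E] {n : ℕ} (U : Set E) (hU : IsOpen U)
    (φ : E → (Fin n → ℂ)) :
    PHMOn φ U ↔
    ∀ V : Set (Fin n → ℂ), IsOpen V → ∀ ψ : (Fin n → ℂ) → ℂ, DifferentiableOn ℂ ψ V →
      HarmonicOn (fun y => (ψ (φ y)).re) (U ∩ φ ⁻¹' V) ∧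
      HarmonicOn (fun y => (ψ (φ y)).im) (U ∩ φ ⁻¹' V) := by
  refine ⟨fun h V hV ψ hψ => h.harmonicOn_re_im_comp hU hV hψ, fun H => ?_⟩
  have hentire (ψ : (Fin n → ℂ) → ℂ) (hψ : Differentiable ℂ ψ) :
      ContDiffOn ℝ 2 (fun y => ψ (φ y)) U ∧ ∀ x ∈ U, Δ (fun y => ψ (φ y)) x = 0 := by
    rw [← harmonicOn_re_im_iff hU]
    simpa using H Set.univ isOpen_univ ψ hψ.differentiableOn
  have hcoord (k : Fin n) := hentire (· k) (by fun_prop)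
  have hφ : ContDiffOn ℝ 2 φ U := contDiffOn_pi.2 fun k => (hcoord k).1
  refine (phmOn_iff_laplacian_gradientProduct_eq_zero hU).2
    ⟨hφ, fun x hx => ⟨funext fun k => ?_, fun A B => ?_⟩⟩
  · rw [laplacian_pi_apply (hφ.contDiffAt (hU.mem_nhds hx)), (hcoord k).2 x hx, Pi.zero_apply]
  · have hcoordAt (k : Fin n) := (hcoord k).1.contDiffAt (hU.mem_nhds hx)
    have hprod := (hentire (fun z => z A * z B) (by fun_prop)).2 x hx
    rw [laplacian_mul_eq_gradientProduct (hcoordAt A) (hcoordAt B), (hcoord A).2 x hx,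
      (hcoord B).2 x hx] at hprod
    simpa using hprod

/-- A `C²` map `φ : U → ℂⁿ` is a pseudo harmonic morphism if and only if it pulls back
local holomorphic functions on `ℂⁿ` to harmonic functions: for every open `V ⊆ ℂⁿ` and
every holomorphic `ψ : V → ℂ`, the real and imaginary parts of `ψ ∘ φ` are harmonic
on `φ⁻¹(V)`. -/
theorem phm_iff_pullback_holom_harmonic {E : Type*} [NormedAddCommGroup E]
    [InnerProductSpace ℝ E] [FiniteDimensional ℝ E] {n : ℕ}
    (U : Set E) (hU : IsOpen U) (hUne : U.Nonempty)
    (φ : E → (Fin n → ℂ)) (hφ : ContDiffOn ℝ 2 φ U) :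
    PHMOn φ U ↔
    ∀ V : Set (Fin n → ℂ), IsOpen V → ∀ ψ : (Fin n → ℂ) → ℂ, DifferentiableOn ℂ ψ V →
      HarmonicOn (fun y => (ψ (φ y)).re) (U ∩ φ ⁻¹' V) ∧
      HarmonicOn (fun y => (ψ (φ y)).im) (U ∩ φ ⁻¹' V) :=
  phm_iff_pullback_holom_harmonic_general U hU φ
end

section
/- Let E be a finite-dimensional real inner product space, U ⊆ E a nonempty open set, and φ : U → ℂⁿ a C² map such that for every open set V ⊆ ℂⁿ and every harmonic function h : V → ℝ (where ℂⁿ is identified with the Euclidean space ℝ^{2n}), the function h∘φ is harmonic on φ⁻¹(V). Then φ is a pseudo harmonic morphism, i.e. φ is harmonic and pseudo-horizontally weakly conformal. -/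
/-!
For harmonic `f` and `g` the Leibniz rule for the Laplacian reduces to `Δ(f g) = 2 ⟪∇f, ∇g⟫`, so a
map `φ` with harmonic components is pseudo-horizontally weakly conformal exactly when the real and
imaginary parts of every product `φ_A φ_B` are harmonic. Read from left to right for the identity of
`ℂⁿ`, this says that the real and imaginary parts of `z_A z_B` are harmonic; a harmonic morphism
pulls them back to harmonic functions, and the equivalence read from right to left for `φ`
concludes.
-/

open scoped RealInnerProductSpace

/-- Pseudo-horizontally weakly conformal map into `ℂⁿ` (as the Euclidean space
`EuclideanSpace ℂ (Fin n) ≅ ℝ^{2n}`), on a set `U`. -/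
def PHWCOnE {E : Type*} [NormedAddCommGroup E] [InnerProductSpace ℝ E] [CompleteSpace E]
    {n : ℕ} (φ : E → EuclideanSpace ℂ (Fin n)) (U : Set E) : Prop :=
  ∀ A B : Fin n, ∀ x ∈ U,
    ⟪gradient (fun y => (φ y A).re) x, gradient (fun y => (φ y B).re) x⟫ -
      ⟪gradient (fun y => (φ y A).im) x, gradient (fun y => (φ y B).im) x⟫ = 0 ∧
    ⟪gradient (fun y => (φ y A).im) x, gradient (fun y => (φ y B).re) x⟫ +
      ⟪gradient (fun y => (φ y A).re) x, gradient (fun y => (φ y B).im) x⟫ = 0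

open scoped Topology

section Laplacian

variable {E : Type*} [NormedAddCommGroup E] [InnerProductSpace ℝ E] [CompleteSpace E]
  {f g : E → ℝ} {x : E}

lemma eventually_hasGradientAt_of_contDiffAt_two (hf : ContDiffAt ℝ 2 f x) :
    ∀ᶠ y in 𝓝 x, HasGradientAt f (gradient f y) y :=
  (hf.eventually (by simp)).mono fun _ hy => (hy.differentiableAt two_ne_zero).hasGradientAt

lemma differentiableAt_gradient_of_contDiffAt_two (hf : ContDiffAt ℝ 2 f x) :
    DifferentiableAt ℝ (gradient f) x :=
  have hf' : DifferentiableAt ℝ (fderiv ℝ f) x :=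
    (hf.fderiv_right (m := 1) one_add_one_eq_two.le).differentiableAt one_ne_zero
  (InnerProductSpace.toDual ℝ E).symm.toContinuousLinearEquiv.differentiableAt.comp x hf'

lemma lap_eq_trace_of_hasGradientAt {f' : E → E} {L : E →L[ℝ] E}
    (hf : ∀ᶠ y in 𝓝 x, HasGradientAt f (f' y) y) (hf' : HasFDerivAt f' L x) :
    lap f x = LinearMap.trace ℝ E L := by
  have h : gradient f =ᶠ[𝓝 x] f' := hf.mono fun _ hy => hy.gradient
  rw [lap, h.fderiv_eq, hf'.fderiv]

lemma lap_add (hf : ContDiffAt ℝ 2 f x) (hg : ContDiffAt ℝ 2 g x) :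
    lap (fun y => f y + g y) x = lap f x + lap g x := by
  have hgrad : ∀ᶠ y in 𝓝 x,
      HasGradientAt (fun y => f y + g y) (gradient f y + gradient g y) y := by
    filter_upwards [eventually_hasGradientAt_of_contDiffAt_two hf,
      eventually_hasGradientAt_of_contDiffAt_two hg] with y hfy hgy
    rw [hasGradientAt_iff_hasFDerivAt, map_add]
    exact hfy.hasFDerivAt.fun_add hgy.hasFDerivAt
  rw [lap_eq_trace_of_hasGradientAt hgrad
    ((differentiableAt_gradient_of_contDiffAt_two hf).hasFDerivAt.fun_add
      (differentiableAt_gradient_of_contDiffAt_two hg).hasFDerivAt)]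
  exact map_add (LinearMap.trace ℝ E) _ _

lemma lap_sub (hf : ContDiffAt ℝ 2 f x) (hg : ContDiffAt ℝ 2 g x) :
    lap (fun y => f y - g y) x = lap f x - lap g x := by
  have h := lap_add (hf.sub hg) hg
  simp only [sub_add_cancel] at h
  exact eq_sub_of_add_eq h.symm

lemma lap_mul {E : Type*} [NormedAddCommGroup E] [InnerProductSpace ℝ E] [FiniteDimensional ℝ E]
    {f g : E → ℝ} {x : E} (hf : ContDiffAt ℝ 2 f x) (hg : ContDiffAt ℝ 2 g x) :
    lap (fun y => f y * g y) x =
      f x * lap g x + g x * lap f x + 2 * ⟪gradient f x, gradient g x⟫ := by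
  have hgrad : ∀ᶠ y in 𝓝 x,
      HasGradientAt (fun y => f y * g y) (f y • gradient g y + g y • gradient f y) y := by
    filter_upwards [eventually_hasGradientAt_of_contDiffAt_two hf,
      eventually_hasGradientAt_of_contDiffAt_two hg] with y hfy hgy
    simpa [hasGradientAt_iff_hasFDerivAt] using hfy.hasFDerivAt.fun_mul hgy.hasFDerivAt
  have hderiv :=
    ((hf.differentiableAt two_ne_zero).hasFDerivAt.fun_smul
      (differentiableAt_gradient_of_contDiffAt_two hg).hasFDerivAt).fun_add
    ((hg.differentiableAt two_ne_zero).hasFDerivAt.fun_smul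
      (differentiableAt_gradient_of_contDiffAt_two hf).hasFDerivAt)
  -- The cross terms are traces of the rank-one operators `⟪∇f, ·⟫ ∇g` and `⟪∇g, ·⟫ ∇f`.
  have trace_smulRight (l : E →L[ℝ] ℝ) (v : E) :
      LinearMap.trace ℝ E (l.smulRight v : E →L[ℝ] E).toLinearMap = l v :=
    LinearMap.trace_smulRight (l : E →ₗ[ℝ] ℝ) v
  rw [lap_eq_trace_of_hasGradientAt hgrad hderiv]
  simp only [ContinuousLinearMap.toLinearMap_add, ContinuousLinearMap.toLinearMap_smul, map_add,
    map_smul, trace_smulRight, ← inner_gradient_left, smul_eq_mul,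
    real_inner_comm (gradient f x) (gradient g x), lap]
  ring

lemma gradient_inner_left (v : E) : gradient (fun y : E => ⟪v, y⟫) = fun _ => v :=
  gradient_eq fun _ => (InnerProductSpace.toDual ℝ E v).hasFDerivAt

lemma harmonicOn_inner_left (v : E) (U : Set E) : HarmonicOn (fun y : E => ⟪v, y⟫) U :=
  ⟨(contDiff_const.inner ℝ contDiff_id).contDiffOn, fun _ _ => by simp [lap, gradient_inner_left]⟩

end Laplacian

namespace HarmonicOn

variable {E : Type*} [NormedAddCommGroup E] [InnerProductSpace ℝ E] [FiniteDimensional ℝ E]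
  {f₁ f₂ g₁ g₂ : E → ℝ} {U : Set E}

lemma lap_mul (hU : IsOpen U) (hf₁ : HarmonicOn f₁ U) (hf₂ : HarmonicOn f₂ U) {x : E}
    (hx : x ∈ U) :
    lap (fun y => f₁ y * f₂ y) x = 2 * ⟪gradient f₁ x, gradient f₂ x⟫ := by
  rw [_root_.lap_mul (hf₁.1.contDiffAt (hU.mem_nhds hx)) (hf₂.1.contDiffAt (hU.mem_nhds hx)),
    hf₁.2 x hx, hf₂.2 x hx]
  ring

lemma mul_add_mul_iff (hU : IsOpen U) (hf₁ : HarmonicOn f₁ U) (hf₂ : HarmonicOn f₂ U)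
    (hg₁ : HarmonicOn g₁ U) (hg₂ : HarmonicOn g₂ U) :
    HarmonicOn (fun y => f₁ y * f₂ y + g₁ y * g₂ y) U ↔
      ∀ x ∈ U, ⟪gradient f₁ x, gradient f₂ x⟫ + ⟪gradient g₁ x, gradient g₂ x⟫ = 0 := by
  have hf := hf₁.1.mul hf₂.1
  have hg := hg₁.1.mul hg₂.1
  refine (and_iff_right (hf.add hg)).trans (forall₂_congr fun x hx => ?_)
  have hUx := hU.mem_nhds hx
  rw [lap_add (hf.contDiffAt hUx) (hg.contDiffAt hUx), lap_mul hU hf₁ hf₂ hx,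
    lap_mul hU hg₁ hg₂ hx, ← mul_add, mul_eq_zero_iff_left two_ne_zero]

lemma mul_sub_mul_iff (hU : IsOpen U) (hf₁ : HarmonicOn f₁ U) (hf₂ : HarmonicOn f₂ U)
    (hg₁ : HarmonicOn g₁ U) (hg₂ : HarmonicOn g₂ U) :
    HarmonicOn (fun y => f₁ y * f₂ y - g₁ y * g₂ y) U ↔
      ∀ x ∈ U, ⟪gradient f₁ x, gradient f₂ x⟫ - ⟪gradient g₁ x, gradient g₂ x⟫ = 0 := by
  have hf := hf₁.1.mul hf₂.1
  have hg := hg₁.1.mul hg₂.1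
  refine (and_iff_right (hf.sub hg)).trans (forall₂_congr fun x hx => ?_)
  have hUx := hU.mem_nhds hx
  rw [lap_sub (hf.contDiffAt hUx) (hg.contDiffAt hUx), lap_mul hU hf₁ hf₂ hx,
    lap_mul hU hg₁ hg₂ hx, ← mul_sub, mul_eq_zero_iff_left two_ne_zero]

end HarmonicOn

lemma phwcOnE_iff_harmonicOn_mul {E : Type*} [NormedAddCommGroup E] [InnerProductSpace ℝ E]
    [FiniteDimensional ℝ E] {n : ℕ} {φ : E → EuclideanSpace ℂ (Fin n)} {U : Set E} (hU : IsOpen U)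
    (hre : ∀ A, HarmonicOn (fun y => (φ y A).re) U)
    (him : ∀ A, HarmonicOn (fun y => (φ y A).im) U) :
    PHWCOnE φ U ↔ ∀ A B, HarmonicOn (fun y => (φ y A * φ y B).re) U ∧
      HarmonicOn (fun y => (φ y A * φ y B).im) U := by
  refine forall₂_congr fun A B => ?_
  simp only [Complex.mul_re, Complex.mul_im, add_comm ((φ _ A).re * _),
    HarmonicOn.mul_sub_mul_iff hU (hre A) (hre B) (him A) (him B),
    HarmonicOn.mul_add_mul_iff hU (him A) (hre B) (hre A) (him B), forall₂_and]

section Coordinates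

variable {ι : Type*} [Fintype ι]

lemma real_inner_single_left [DecidableEq ι] (i : ι) (c : ℂ) (z : EuclideanSpace ℂ ι) :
    ⟪EuclideanSpace.single i c, z⟫ = ⟪c, z i⟫ := by
  simp [PiLp.inner_apply, apply_ite]

lemma re_apply_eq_inner_single [DecidableEq ι] (z : EuclideanSpace ℂ ι) (i : ι) :
    (z i).re = ⟪EuclideanSpace.single i (1 : ℂ), z⟫ := by
  simp [real_inner_single_left, Complex.inner]

lemma im_apply_eq_inner_single [DecidableEq ι] (z : EuclideanSpace ℂ ι) (i : ι) :
    (z i).im = ⟪EuclideanSpace.single i Complex.I, z⟫ := by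
  simp [real_inner_single_left, Complex.inner]

lemma harmonicOn_re_apply (i : ι) (V : Set (EuclideanSpace ℂ ι)) :
    HarmonicOn (fun z : EuclideanSpace ℂ ι => (z i).re) V := by
  classical simpa only [re_apply_eq_inner_single] using harmonicOn_inner_left _ V

lemma harmonicOn_im_apply (i : ι) (V : Set (EuclideanSpace ℂ ι)) :
    HarmonicOn (fun z : EuclideanSpace ℂ ι => (z i).im) V := by
  classical simpa only [im_apply_eq_inner_single] using harmonicOn_inner_left _ V

lemma phwcOnE_id {n : ℕ} (V : Set (EuclideanSpace ℂ (Fin n))) : PHWCOnE id V := by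
  intro A B z _
  simp only [id_eq, re_apply_eq_inner_single, im_apply_eq_inner_single, gradient_inner_left]
  by_cases hAB : A = B <;> simp [real_inner_single_left, hAB, Complex.inner]

end Coordinates

theorem harmonic_morphism_is_phm_general {E : Type*} [NormedAddCommGroup E]
    [InnerProductSpace ℝ E] [FiniteDimensional ℝ E] {n : ℕ} {U : Set E} (hU : IsOpen U)
    {φ : E → EuclideanSpace ℂ (Fin n)}
    (hmor : ∀ h : EuclideanSpace ℂ (Fin n) → ℝ, HarmonicOn h Set.univ →
      HarmonicOn (fun y => h (φ y)) U) :
    (∀ k : Fin n, HarmonicOn (fun y => (φ y k).re) U ∧ HarmonicOn (fun y => (φ y k).im) U) ∧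
    PHWCOnE φ U := by
  have hre (k : Fin n) := hmor _ (harmonicOn_re_apply k Set.univ)
  have him (k : Fin n) := hmor _ (harmonicOn_im_apply k Set.univ)
  have hmul := (phwcOnE_iff_harmonicOn_mul isOpen_univ (fun k => harmonicOn_re_apply k Set.univ)
    fun k => harmonicOn_im_apply k Set.univ).1 (phwcOnE_id (n := n) Set.univ)
  exact ⟨fun k => ⟨hre k, him k⟩, (phwcOnE_iff_harmonicOn_mul hU hre him).2 fun A B =>
    ⟨hmor _ (hmul A B).1, hmor _ (hmul A B).2⟩⟩

/-- Every `C²` harmonic morphism (a map pulling back harmonic functions on open subsets of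
`ℂⁿ ≅ ℝ^{2n}` to harmonic functions) with values in the flat Kähler manifold `ℂⁿ` is a
pseudo harmonic morphism: it is harmonic and pseudo-horizontally weakly conformal. -/
theorem harmonic_morphism_is_phm {E : Type*} [NormedAddCommGroup E]
    [InnerProductSpace ℝ E] [FiniteDimensional ℝ E] {n : ℕ}
    (U : Set E) (hU : IsOpen U) (hUne : U.Nonempty)
    (φ : E → EuclideanSpace ℂ (Fin n)) (hφ : ContDiffOn ℝ 2 φ U)
    (hmor : ∀ V : Set (EuclideanSpace ℂ (Fin n)), IsOpen V →
      ∀ h : EuclideanSpace ℂ (Fin n) → ℝ, HarmonicOn h V →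
        HarmonicOn (fun y => h (φ y)) (U ∩ φ ⁻¹' V)) :
    (∀ k : Fin n, HarmonicOn (fun y => (φ y k).re) U ∧ HarmonicOn (fun y => (φ y k).im) U) ∧
    PHWCOnE φ U :=
  harmonic_morphism_is_phm_general hU fun h hh => by simpa using hmor Set.univ isOpen_univ h hh
end

section
/- Let E be a finite-dimensional real inner product space, U ⊆ E a nonempty open set, and φ : U → ℂⁿ a differentiable map with components φ^k (k = 1,…,n). Suppose that for all k, l ∈ {1,…,n} the ℂ-valued function φ^k + φ^l is pseudo-horizontally weakly conformal, i.e. writing φ^k + φ^l = w₁ + i w₂ one has ‖∇w₁(x)‖² = ‖∇w₂(x)‖² and ⟨∇w₁(x), ∇w₂(x)⟩ = 0 for all x ∈ U. Then φ is pseudo-horizontally weakly conformal. -/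
open scoped RealInnerProductSpace

/-! The condition `Q(f, f) = 0` for the complex-bilinear pairing `Q(f, g) = ⟨∇f, ∇g⟩` of
complex-valued functions has weak conformality of `f` as its real and imaginary parts, so it holds
for every `f = φᵏ + φˡ`. The case `k = l` gives `4 Q(φᵏ, φᵏ) = 0`, and polarization then gives
`2 Q(φᵏ, φˡ) = Q(φᵏ + φˡ, φᵏ + φˡ) = 0`. -/

theorem gradient_fun_add {𝕜 E : Type*} [RCLike 𝕜] [NormedAddCommGroup E]
    [InnerProductSpace 𝕜 E] [CompleteSpace E] {f g : E → 𝕜} {x : E}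
    (hf : DifferentiableAt 𝕜 f x) (hg : DifferentiableAt 𝕜 g x) :
    gradient (fun y => f y + g y) x = gradient f x + gradient g x := by
  simp only [gradient, fderiv_fun_add hf hg, map_add]

section GradPairing

variable {E : Type*} [NormedAddCommGroup E] [InnerProductSpace ℝ E] [CompleteSpace E]
  {f g h : E → ℂ} {x : E}

theorem gradient_re_add (hf : DifferentiableAt ℝ f x) (hg : DifferentiableAt ℝ g x) :
    gradient (fun y => (f y + g y).re) x =
      gradient (fun y => (f y).re) x + gradient (fun y => (g y).re) x :=
  gradient_fun_add (Complex.reCLM.differentiableAt.comp x hf)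
    (Complex.reCLM.differentiableAt.comp x hg)

theorem gradient_im_add (hf : DifferentiableAt ℝ f x) (hg : DifferentiableAt ℝ g x) :
    gradient (fun y => (f y + g y).im) x =
      gradient (fun y => (f y).im) x + gradient (fun y => (g y).im) x :=
  gradient_fun_add (Complex.imCLM.differentiableAt.comp x hf)
    (Complex.imCLM.differentiableAt.comp x hg)

/-- The pairing `⟨∇f, ∇g⟩` at `x` of the gradients of two complex-valued functions, where
`∇f = ∇(re f) + i ∇(im f)` and the real inner product is extended complex-bilinearly (not
sesquilinearly) to the complexification of `E`. Pseudo-horizontal weak conformality is the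
vanishing of this pairing on all pairs of components. -/
noncomputable def gradPairing (f g : E → ℂ) (x : E) : ℂ where
  re := ⟪gradient (fun y => (f y).re) x, gradient (fun y => (g y).re) x⟫ -
    ⟪gradient (fun y => (f y).im) x, gradient (fun y => (g y).im) x⟫
  im := ⟪gradient (fun y => (f y).im) x, gradient (fun y => (g y).re) x⟫ +
    ⟪gradient (fun y => (f y).re) x, gradient (fun y => (g y).im) x⟫

theorem gradPairing_comm (f g : E → ℂ) (x : E) : gradPairing f g x = gradPairing g f x := by
  apply Complex.ext
  · simp only [gradPairing, real_inner_comm]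
  · simp only [gradPairing, real_inner_comm, add_comm]

theorem gradPairing_add_left (hf : DifferentiableAt ℝ f x) (hg : DifferentiableAt ℝ g x) :
    gradPairing (fun y => f y + g y) h x = gradPairing f h x + gradPairing g h x := by
  apply Complex.ext
  · rw [Complex.add_re]
    simp only [gradPairing, gradient_re_add hf hg, gradient_im_add hf hg, inner_add_left]
    ring
  · rw [Complex.add_im]
    simp only [gradPairing, gradient_re_add hf hg, gradient_im_add hf hg, inner_add_left]
    ring

theorem gradPairing_add_right (hf : DifferentiableAt ℝ f x) (hg : DifferentiableAt ℝ g x) :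
    gradPairing h (fun y => f y + g y) x = gradPairing h f x + gradPairing h g x := by
  simp only [gradPairing_comm h, gradPairing_add_left hf hg]

theorem gradPairing_add_self (hf : DifferentiableAt ℝ f x) (hg : DifferentiableAt ℝ g x) :
    gradPairing (fun y => f y + g y) (fun y => f y + g y) x =
      gradPairing f f x + 2 * gradPairing f g x + gradPairing g g x := by
  rw [gradPairing_add_left hf hg, gradPairing_add_right hf hg, gradPairing_add_right hf hg,
    gradPairing_comm g f]
  ring

theorem gradPairing_self_eq_zero_iff :
    gradPairing f f x = 0 ↔
      ‖gradient (fun y => (f y).re) x‖ ^ 2 = ‖gradient (fun y => (f y).im) x‖ ^ 2 ∧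
        ⟪gradient (fun y => (f y).re) x, gradient (fun y => (f y).im) x⟫ = 0 := by
  simp only [gradPairing, Complex.ext_iff, Complex.zero_re, Complex.zero_im,
    real_inner_self_eq_norm_sq, sub_eq_zero,
    real_inner_comm (gradient (fun y => (f y).re) x) (gradient (fun y => (f y).im) x),
    add_self_eq_zero]

theorem phwcOn_iff_gradPairing_eq_zero {n : ℕ} {φ : E → (Fin n → ℂ)} {U : Set E} :
    PHWCOn φ U ↔
      ∀ A B : Fin n, ∀ x ∈ U, gradPairing (fun y => φ y A) (fun y => φ y B) x = 0 := by
  simp only [PHWCOn, gradPairing, Complex.ext_iff, Complex.zero_re, Complex.zero_im]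

theorem gradPairing_eq_zero_of_add_self_eq_zero {ι : Type*} {φ : ι → E → ℂ}
    (hφ : ∀ k, DifferentiableAt ℝ (φ k) x)
    (hsum : ∀ k l, gradPairing (fun y => φ k y + φ l y) (fun y => φ k y + φ l y) x = 0)
    (k l : ι) : gradPairing (φ k) (φ l) x = 0 := by
  have polarization (i j : ι) :
      gradPairing (φ i) (φ i) x + 2 * gradPairing (φ i) (φ j) x +
        gradPairing (φ j) (φ j) x = 0 :=
    (gradPairing_add_self (hφ i) (hφ j)).symm.trans (hsum i j)
  have self_eq_zero (i : ι) : gradPairing (φ i) (φ i) x = 0 := by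
    linear_combination (1 / 4) * polarization i i
  linear_combination (1 / 2) * (polarization k l - self_eq_zero k - self_eq_zero l)

theorem phwc_of_sums_of_components_phwc_general {n : ℕ} {U : Set E} {φ : E → (Fin n → ℂ)}
    (hφ : ∀ x ∈ U, DifferentiableAt ℝ φ x)
    (hsum : ∀ k l : Fin n, ∀ x ∈ U,
      ‖gradient (fun y => (φ y k + φ y l).re) x‖ ^ 2 =
        ‖gradient (fun y => (φ y k + φ y l).im) x‖ ^ 2 ∧
      ⟪gradient (fun y => (φ y k + φ y l).re) x,
        gradient (fun y => (φ y k + φ y l).im) x⟫ = 0) :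
    PHWCOn φ U :=
  phwcOn_iff_gradPairing_eq_zero.2 fun A B x hx =>
    gradPairing_eq_zero_of_add_self_eq_zero (φ := fun k y => φ y k)
      (differentiableAt_pi.1 (hφ x hx))
      (fun k l => gradPairing_self_eq_zero_iff.2 (hsum k l x hx)) A B

end GradPairing

/-- If for all indices `k, l` the complex-valued function `φᵏ + φˡ` is
pseudo-horizontally weakly conformal on `U`, then the differentiable map
`φ : U → ℂⁿ` is pseudo-horizontally weakly conformal on `U`. -/
theorem phwc_of_sums_of_components_phwc {E : Type*} [NormedAddCommGroup E]
    [InnerProductSpace ℝ E] [FiniteDimensional ℝ E] {n : ℕ}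
    (U : Set E) (hU : IsOpen U) (hUne : U.Nonempty)
    (φ : E → (Fin n → ℂ)) (hφ : DifferentiableOn ℝ φ U)
    (hsum : ∀ k l : Fin n, ∀ x ∈ U,
      ‖gradient (fun y => (φ y k + φ y l).re) x‖ ^ 2 =
        ‖gradient (fun y => (φ y k + φ y l).im) x‖ ^ 2 ∧
      ⟪gradient (fun y => (φ y k + φ y l).re) x,
        gradient (fun y => (φ y k + φ y l).im) x⟫ = 0) :
    PHWCOn φ U :=
  phwc_of_sums_of_components_phwc_general
    (fun _ hx => hφ.differentiableAt (hU.mem_nhds hx)) hsum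
end
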